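/- Let ε > 0, d ≥ 2, and f : [0,1]^d → ℝ be 1-Lipschitz (Euclidean norm). Then there exists a GroupSort neural network D of grouping size ⌈2√d/ε⌉ satisfying Assumption 1 with sup_{x ∈ [0,1]^d} |f(x) − D(x)| ≤ ε, whose depth is at most C·d² and whose size is at most C·(2√d/ε)^{d²−1}, for a constant C independent of ε. -/

import Mathlib

open Matrix

/-- A GroupSort feedforward neural network with grouping size `k`, input dimension `d`
and real output.  `depth` is the number of affine layers (`q` in the paper), so there are
`depth - 1` hidden layers of widths `width 1, …, width (depth - 1)` (each divisible by `k`),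
with `width 0 = d` (input) and `width depth = 1` (output). -/
structure GroupSortNet (k d : ℕ) where
  depth : ℕ
  depth_pos : 1 ≤ depth
  width : ℕ → ℕ
  width_in : width 0 = d
  width_out : width depth = 1
  width_div : ∀ i, 1 ≤ i → i ≤ depth - 1 → k ∣ width i
  V : (i : ℕ) → Matrix (Fin (width (i + 1))) (Fin (width i)) ℝ
  c : (i : ℕ) → Fin (width (i + 1)) → ℝ

/-- The GroupSort activation with grouping size `k`: the coordinates are split into
consecutive groups of `k` elements and each group is sorted in decreasing order. -/
noncomputable def groupSortFun (k : ℕ) {ν : ℕ} (x : Fin ν → ℝ) : Fin ν → ℝ := fun i =>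
  if hk : 0 < k then
    let grp : Fin k → ℝ := fun j =>
      if h : ((i : ℕ) / k) * k + (j : ℕ) < ν then x ⟨((i : ℕ) / k) * k + (j : ℕ), h⟩ else 0
    (grp ∘ Tuple.sort grp)
      ⟨k - 1 - (i : ℕ) % k, lt_of_le_of_lt (Nat.sub_le _ _) (Nat.sub_lt hk Nat.one_pos)⟩
  else x i

/-- Output of the hidden layers: `post x i` is the (activated) output of layer `i`. -/
noncomputable def GroupSortNet.post {k d : ℕ} (N : GroupSortNet k d) (x : Fin d → ℝ) :
    (i : ℕ) → Fin (N.width i) → ℝ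
  | 0 => fun j => x (Fin.cast N.width_in j)
  | i + 1 => groupSortFun k (N.V i *ᵥ N.post x i + N.c i)

/-- The real-valued function computed by the network (no activation after the last
affine layer). -/
noncomputable def GroupSortNet.eval {k d : ℕ} (N : GroupSortNet k d) (x : Fin d → ℝ) : ℝ :=
  (N.V (N.depth - 1) *ᵥ N.post x (N.depth - 1) + N.c (N.depth - 1))
    ⟨0, by
      have h : N.depth - 1 + 1 = N.depth := Nat.succ_pred_eq_of_pos N.depth_pos
      rw [h, N.width_out]
      exact Nat.one_pos⟩

/-- The size of the network: the sum of the widths of the hidden layers. -/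
def GroupSortNet.size {k d : ℕ} (N : GroupSortNet k d) : ℕ :=
  ∑ i ∈ Finset.Icc 1 (N.depth - 1), N.width i

/-- Assumption 1: `‖V₁‖_{2,∞} ≤ 1` (every row of `V₁` has Euclidean norm at most `1`),
`‖V_i‖_∞ ≤ 1` for `i = 2, …, q` (every row has `ℓ¹`-norm at most `1`), and all offsets
are bounded by some constant `K₂ ≥ 0`. -/
def GroupSortNet.Assumption1 {k d : ℕ} (N : GroupSortNet k d) : Prop :=
  (∀ r, ∑ j, (N.V 0 r j) ^ 2 ≤ 1) ∧
  (∀ i, 1 ≤ i → i < N.depth → ∀ r, ∑ j, |N.V i r j| ≤ 1) ∧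
  (∃ K₂ : ℝ, 0 ≤ K₂ ∧ ∀ i, i < N.depth → ∀ r, |N.c i r| ≤ K₂)

/-! Cut the cube into `k ^ d` cells of side `1 / k`, with centres `c`. Every function
`x ↦ max_c min_u (f c + ⟪w c u, x - c⟫)` with unit-bounded slopes is at least `f x - 2 ‖x - c‖` for
the centre `c` nearest to `x`, whatever the slopes. It is also at most `f x + ε` as soon as every
centre `c` has one slope `w c u` whose affine function is at most `f x + ε` at `x`.

Secant slopes `w c u` towards all the other centres `u` have this property, since the affine
function agrees with `f` at the centre `u` nearest to `x`. This takes `k ^ (2 d)` affine functions,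
and `2 d ≤ d ^ 2 - 1` only if `3 ≤ d`. In the plane, where `k ^ 3` affine functions are allowed, use
instead the slopes `-v` for `v` among `k` equidistributed unit vectors: one of them makes an angle
at most `π / k` with `x - c`, so the cone `f c - ‖x - c‖`, which is below `f x`, is reproduced up
to an error of order `1 / k ^ 2`.

A maximum or a minimum over `k ^ L` entries is computed by a `k`-ary tree of `L` GroupSort layers,
which keep the first or the last entry of each sorted group of size `k`.
-/

open scoped RealInnerProductSpace Real

section Activation

variable {k m n : ℕ}

theorem groupSortFun_comp_cast (h : m = n) (z : Fin n → ℝ) :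
    groupSortFun k (z ∘ Fin.cast h) = groupSortFun k z ∘ Fin.cast h := by
  subst h
  rfl

theorem groupSortFun_finProdFinEquiv (z : Fin (m * k) → ℝ) (r : Fin m) (s : Fin k) :
    groupSortFun k z (finProdFinEquiv (r, s)) =
      z (finProdFinEquiv (r, Tuple.sort (fun j => z (finProdFinEquiv (r, j))) s.rev)) := by
  have hk : 0 < k := s.pos
  have hdiv : (finProdFinEquiv (r, s) : ℕ) / k = r := by
    simp [Nat.add_mul_div_left _ _ hk, Nat.div_eq_of_lt s.isLt]
  have hmod : (finProdFinEquiv (r, s) : ℕ) % k = s := by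
    simp [Nat.mod_eq_of_lt s.isLt]
  have hindex (j : Fin k) : (r : ℕ) * k + j = finProdFinEquiv (r, j) := by
    simp [mul_comm, add_comm]
  have hrank (h : k - 1 - (s : ℕ) < k) : (⟨k - 1 - s, h⟩ : Fin k) = s.rev := by
    ext
    simp only [Fin.val_rev]
    omega
  simp only [groupSortFun, dif_pos hk, hdiv, hmod, hindex, Fin.is_lt, dif_pos, Fin.eta,
    hrank, Function.comp_apply]

section TupleSort

variable {α : Type*} [ConditionallyCompleteLinearOrder α] [NeZero k]

theorem apply_sort_zero (g : Fin k → α) : g (Tuple.sort g 0) = ⨅ j, g j := by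
  refine le_antisymm (le_ciInf fun j => ?_) (Finite.ciInf_le g _)
  simpa using Tuple.monotone_sort g (Fin.zero_le ((Tuple.sort g).symm j))

theorem apply_sort_rev_zero (g : Fin k → α) : g (Tuple.sort g (Fin.rev 0)) = ⨆ j, g j := by
  refine le_antisymm (Finite.le_ciSup g _) (ciSup_le fun j => ?_)
  have hle : (Tuple.sort g).symm j ≤ Fin.rev 0 := Fin.le_rev_iff.mpr (Fin.zero_le _)
  simpa using Tuple.monotone_sort g hle

end TupleSort

variable [NeZero k] (z : Fin (m * k) → ℝ) (r : Fin m)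

theorem groupSortFun_group_zero :
    groupSortFun k z (finProdFinEquiv (r, 0)) = ⨆ j, z (finProdFinEquiv (r, j)) :=
  (groupSortFun_finProdFinEquiv z r 0).trans
    (apply_sort_rev_zero fun j => z (finProdFinEquiv (r, j)))

theorem groupSortFun_group_rev_zero :
    groupSortFun k z (finProdFinEquiv (r, Fin.rev 0)) = ⨅ j, z (finProdFinEquiv (r, j)) := by
  rw [groupSortFun_finProdFinEquiv, Fin.rev_rev]
  exact apply_sort_zero fun j => z (finProdFinEquiv (r, j))

end Activation

namespace GroupSortNet

variable {k d m : ℕ}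

/-- The network of depth `1`, without hidden layers, computing `x ↦ A x + c`. -/
def ofAffine (k : ℕ) (A : Matrix (Fin 1) (Fin d) ℝ) (c : Fin 1 → ℝ) : GroupSortNet k d where
  depth := 1
  depth_pos := le_rfl
  width
    | 0 => d
    | _ + 1 => 1
  width_in := rfl
  width_out := rfl
  width_div := by omega
  V
    | 0 => A
    | _ + 1 => 0
  c
    | 0 => c
    | _ + 1 => 0

/-- The network `x ↦ N (σ_k (A x + c))`, obtained from `N` by adding a hidden layer in front. -/
def cons (hk : k ∣ m) (A : Matrix (Fin m) (Fin d) ℝ) (c : Fin m → ℝ) (N : GroupSortNet k m) :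
    GroupSortNet k d where
  depth := N.depth + 1
  depth_pos := Nat.le_add_left 1 N.depth
  width
    | 0 => d
    | i + 1 => N.width i
  width_in := rfl
  width_out := N.width_out
  width_div
    | 0, h, _ => absurd h (by decide)
    | 1, _, _ => hk.trans (dvd_of_eq N.width_in.symm)
    | i + 2, _, h => N.width_div (i + 1) (by omega) (by omega)
  V
    | 0 => A.submatrix (Fin.cast N.width_in) id
    | i + 1 => N.V i
  c
    | 0 => c ∘ Fin.cast N.width_in
    | i + 1 => N.c i

section Cons

variable (hk : k ∣ m) (A : Matrix (Fin m) (Fin d) ℝ) (c : Fin m → ℝ) (N : GroupSortNet k m)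

theorem post_cons_succ (x : Fin d → ℝ) (i : ℕ) :
    (cons hk A c N).post x (i + 1) = N.post (groupSortFun k (A *ᵥ x + c)) i := by
  induction i with
  | zero => exact groupSortFun_comp_cast N.width_in (A *ᵥ x + c)
  | succ i ih => exact congrArg (fun z => groupSortFun k (N.V i *ᵥ z + N.c i)) ih

theorem depth_cons_sub_one : (cons hk A c N).depth - 1 = N.depth - 1 + 1 :=
  (Nat.sub_add_cancel N.depth_pos).symm

theorem eval_cons (x : Fin d → ℝ) :
    (cons hk A c N).eval x = N.eval (groupSortFun k (A *ᵥ x + c)) := by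
  have hpre (i j : ℕ) (hij : i = j + 1) (r : Fin ((cons hk A c N).width (i + 1))) :
      ((cons hk A c N).V i *ᵥ (cons hk A c N).post x i + (cons hk A c N).c i) r =
        (N.V j *ᵥ N.post (groupSortFun k (A *ᵥ x + c)) j + N.c j)
          (Fin.cast (by rw [hij]; rfl) r) := by
    subst hij
    rw [post_cons_succ]
    rfl
  exact hpre _ _ (depth_cons_sub_one hk A c N) _

theorem size_cons : (cons hk A c N).size = m + N.size := by
  rw [size, size, depth_cons_sub_one]
  simp only [← Finset.Ico_add_one_right_eq_Icc]
  rw [Finset.sum_eq_sum_Ico_succ_bot (by omega), ← Finset.sum_Ico_add']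
  exact congrArg (· + _) N.width_in

variable {A N}

theorem Assumption1.cons (hN : N.Assumption1) (hA : ∀ r, ∑ j, A r j ^ 2 ≤ 1)
    (hV : ∀ r, ∑ j, |N.V 0 r j| ≤ 1) : (cons hk A c N).Assumption1 := by
  obtain ⟨-, hNV, K, hK, hNc⟩ := hN
  refine ⟨fun r => hA (Fin.cast N.width_in r), ?_, K + ∑ r, |c r|, by positivity, ?_⟩
  · rintro (_ | _ | i) hpos hi r
    · omega
    · exact hV r
    · exact hNV (i + 1) (by omega) (Nat.lt_of_succ_lt_succ hi) r
  · rintro (_ | i) hi r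
    · exact (Finset.single_le_sum (f := fun r => |c r|) (fun _ _ => abs_nonneg _)
        (Finset.mem_univ (Fin.cast N.width_in r))).trans (le_add_of_nonneg_left hK)
    · exact (hNc i (Nat.lt_of_succ_lt_succ hi) r).trans
        (le_add_of_nonneg_right (by positivity))

end Cons

theorem ofAffine_assumption1 {A : Matrix (Fin 1) (Fin d) ℝ} (hA : ∀ r, ∑ j, A r j ^ 2 ≤ 1)
    (c : Fin 1 → ℝ) : (ofAffine k A c).Assumption1 := by
  refine ⟨hA, fun i h₁ h₂ => absurd h₂ h₁.not_gt, |c 0|, abs_nonneg _, fun i hi r => ?_⟩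
  obtain rfl : i = 0 := Nat.lt_one_iff.mp hi
  exact (congrArg (fun r => |c r|) (Subsingleton.elim (α := Fin 1) r 0)).le

/-- The matrix picking coordinate `s` of each of `m` consecutive groups of size `k`. -/
def selectMatrix (m : ℕ) (s : Fin k) : Matrix (Fin m) (Fin (m * k)) ℝ :=
  (1 : Matrix (Fin (m * k)) (Fin (m * k)) ℝ).submatrix (fun r => finProdFinEquiv (r, s)) id

theorem selectMatrix_mulVec (s : Fin k) (z : Fin (m * k) → ℝ) :
    selectMatrix m s *ᵥ z = fun r => z (finProdFinEquiv (r, s)) :=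
  funext fun r => congrFun (one_mulVec z) (finProdFinEquiv (r, s))

theorem sum_abs_selectMatrix (s : Fin k) (r : Fin m) : ∑ j, |selectMatrix m s r j| = 1 := by
  simp [selectMatrix, one_apply, apply_ite abs]

theorem sum_sq_selectMatrix (s : Fin k) (r : Fin m) : ∑ j, selectMatrix m s r j ^ 2 = 1 := by
  simp [selectMatrix, one_apply, ite_pow]

/-- The tree-shaped network with `k ^ L` affine leaves `A x + c` in which a group entering a layer
of width `k ^ (i + 1)` is replaced by its entry of rank `s i` in decreasing order. -/
def rankTree (s : ℕ → Fin k) : (L : ℕ) → {d : ℕ} → Matrix (Fin (k ^ L)) (Fin d) ℝ →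
    (Fin (k ^ L) → ℝ) → GroupSortNet k d
  | 0, _, A, c => ofAffine k A c
  | L + 1, _, A, c =>
      cons (dvd_mul_left k (k ^ L)) A c (rankTree s L (selectMatrix (k ^ L) (s L)) 0)

/-- The value at the root of the tree `rankTree s L` when `z` is the vector of its leaves. -/
noncomputable def rankTreeRoot (s : ℕ → Fin k) : (L : ℕ) → (Fin (k ^ L) → ℝ) → ℝ
  | 0, z => z 0
  | L + 1, z => rankTreeRoot s L fun r => groupSortFun k z (finProdFinEquiv (r, s L))

section RankTree

variable (s : ℕ → Fin k) (L : ℕ) (A : Matrix (Fin (k ^ L)) (Fin d) ℝ) (c : Fin (k ^ L) → ℝ)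

theorem rankTree_depth : (rankTree s L A c).depth = L + 1 := by
  induction L generalizing d with
  | zero => rfl
  | succ L ih => exact congrArg (· + 1) (ih (selectMatrix (k ^ L) (s L)) 0)

theorem rankTree_size_le : (rankTree s L A c).size ≤ L * k ^ L := by
  induction L generalizing d with
  | zero => exact le_of_eq (Finset.sum_empty)
  | succ L ih =>
    calc (rankTree s (L + 1) A c).size
        = k ^ (L + 1) + (rankTree s L (selectMatrix (k ^ L) (s L)) 0).size := size_cons ..
      _ ≤ k ^ (L + 1) + L * k ^ L := Nat.add_le_add_left (ih _ _) _
      _ ≤ k ^ (L + 1) + L * k ^ (L + 1) := by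
          gcongr
          exacts [(s 0).pos, L.le_succ]
      _ = (L + 1) * k ^ (L + 1) := by ring

theorem rankTree_eval (x : Fin d → ℝ) :
    (rankTree s L A c).eval x = rankTreeRoot s L (A *ᵥ x + c) := by
  induction L generalizing d with
  | zero => rfl
  | succ L ih =>
    have hselect (z : Fin (k ^ (L + 1)) → ℝ) :
        selectMatrix (k ^ L) (s L) *ᵥ z + 0 = fun r => z (finProdFinEquiv (r, s L)) :=
      (add_zero _).trans (selectMatrix_mulVec (s L) z)
    exact (eval_cons ..).trans ((ih ..).trans (congrArg (rankTreeRoot s L) (hselect _)))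

theorem rankTree_assumption1 (hA : ∀ r, ∑ j, A r j ^ 2 ≤ 1) : (rankTree s L A c).Assumption1 := by
  induction L generalizing d with
  | zero => exact ofAffine_assumption1 hA c
  | succ L ih =>
    refine Assumption1.cons _ c (ih _ 0 fun r => (sum_sq_selectMatrix (s L) r).le) hA ?_
    cases L with
    | zero => exact fun r => (sum_abs_selectMatrix (s 0) r).le
    | succ L => exact fun r => (sum_abs_selectMatrix (s (L + 1)) (Fin.cast _ r)).le

end RankTree

section MaxMin

/-- The leaves of a tree of height `a + b`, grouped by their ancestor at height `b`. -/
def leafEquiv (k a b : ℕ) : Fin (k ^ a) × Fin (k ^ b) ≃ Fin (k ^ (a + b)) :=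
  finProdFinEquiv.trans (finCongr (pow_add k a b).symm)

theorem leafEquiv_succ {a b : ℕ} (p : Fin (k ^ a)) (u : Fin (k ^ b)) (j : Fin k) :
    finProdFinEquiv (leafEquiv k a b (p, u), j) =
      leafEquiv k a (b + 1) (p, finProdFinEquiv (u, j)) := by
  ext
  simp only [leafEquiv, Equiv.trans_apply, finCongr_apply, Fin.val_cast,
    finProdFinEquiv_apply_val]
  ring

theorem leafEquiv_zero {a : ℕ} (p : Fin (k ^ a)) (u : Fin (k ^ 0)) :
    leafEquiv k a 0 (p, u) = p := by
  ext
  simp only [leafEquiv, Equiv.trans_apply, finCongr_apply, Fin.val_cast,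
    finProdFinEquiv_apply_val]
  simp [Nat.lt_one_iff.mp u.isLt]

variable [NeZero k] {s : ℕ → Fin k}

theorem rankTreeRoot_eq_iSup {L : ℕ} (hs : ∀ i < L, s i = 0) (z : Fin (k ^ L) → ℝ) :
    rankTreeRoot s L z = ⨆ i, z i := by
  induction L with
  | zero => exact (ciSup_unique (ι := Fin 1) (s := z)).symm
  | succ L ih =>
    calc rankTreeRoot s (L + 1) z
        = ⨆ r, groupSortFun k z (finProdFinEquiv (r, s L)) := ih (fun i hi => hs i (by omega)) _
      _ = ⨆ r, ⨆ j, z (finProdFinEquiv (r, j)) := by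
          rw [hs L L.lt_succ_self]
          exact iSup_congr (groupSortFun_group_zero z)
      _ = ⨆ i, z i := by
          rw [← Finite.ciSup_prod fun p => z (finProdFinEquiv p)]
          exact finProdFinEquiv.iSup_comp (g := z)

theorem rankTreeRoot_add {a b : ℕ} (hs : ∀ i < b, s (a + i) = Fin.rev 0)
    (z : Fin (k ^ (a + b)) → ℝ) :
    rankTreeRoot s (a + b) z = rankTreeRoot s a fun p => ⨅ u, z (leafEquiv k a b (p, u)) := by
  induction b with
  | zero =>
    congr 1
    funext p
    simp only [leafEquiv_zero]
    exact (ciInf_const (ι := Fin 1)).symm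
  | succ b ih =>
    refine (ih (fun i hi => hs i (by omega)) _).trans (congrArg _ (funext fun p => ?_))
    calc ⨅ u, groupSortFun k z (finProdFinEquiv (leafEquiv k a b (p, u), s (a + b)))
        = ⨅ u, ⨅ j, z (finProdFinEquiv (leafEquiv k a b (p, u), j)) := by
          rw [hs b b.lt_succ_self]
          exact iInf_congr fun u => groupSortFun_group_rev_zero z (leafEquiv k a b (p, u))
      _ = ⨅ v, z (leafEquiv k a (b + 1) (p, v)) := by
          refine (iInf_congr fun u => iInf_congr fun j =>
            congrArg z (leafEquiv_succ p u j)).trans ?_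
          exact (Finite.ciInf_prod fun v =>
            z (leafEquiv k a (b + 1) (p, finProdFinEquiv v))).symm.trans
            (finProdFinEquiv.iInf_comp (g := fun v => z (leafEquiv k a (b + 1) (p, v))))

theorem exists_eval_eq_iSup_iInf {a b : ℕ} {ι κ : Type*} [Fintype ι] [Fintype κ]
    (hι : Fintype.card ι = k ^ a) (hκ : Fintype.card κ = k ^ b)
    {w : ι → κ → EuclideanSpace ℝ (Fin d)} (hw : ∀ p u, ‖w p u‖ ≤ 1) (t : ι → κ → ℝ) :
    ∃ N : GroupSortNet k d, N.Assumption1 ∧ N.depth = a + b + 1 ∧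
      N.size ≤ (a + b) * k ^ (a + b) ∧
      ∀ x : EuclideanSpace ℝ (Fin d), N.eval x.ofLp = ⨆ p, ⨅ u, (⟪w p u, x⟫ + t p u) := by
  let eι := Fintype.equivFinOfCardEq hι
  let eκ := Fintype.equivFinOfCardEq hκ
  let e : ι × κ ≃ Fin (k ^ (a + b)) := (eι.prodCongr eκ).trans (leafEquiv k a b)
  let A : Matrix (Fin (k ^ (a + b))) (Fin d) ℝ := fun i => (w (e.symm i).1 (e.symm i).2).ofLp
  let c : Fin (k ^ (a + b)) → ℝ := fun i => t (e.symm i).1 (e.symm i).2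
  let s : ℕ → Fin k := fun i => if i < a then 0 else Fin.rev 0
  have hmax : ∀ i < a, s i = 0 := fun i hi => if_pos hi
  have hmin : ∀ i < b, s (a + i) = Fin.rev 0 := fun i _ => if_neg (by omega)
  have hA (i) : ∑ j, A i j ^ 2 ≤ 1 := by
    rw [← EuclideanSpace.real_norm_sq_eq]
    exact pow_le_one₀ (norm_nonneg _) (hw _ _)
  have hleaf (x : EuclideanSpace ℝ (Fin d)) (p : ι) (u : κ) :
      (A *ᵥ x.ofLp + c) (leafEquiv k a b (eι p, eκ u)) = ⟪w p u, x⟫ + t p u := by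
    have he : e.symm (leafEquiv k a b (eι p, eκ u)) = (p, u) := e.symm_apply_apply (p, u)
    simp only [Pi.add_apply, mulVec, A, c, he, EuclideanSpace.inner_eq_star_dotProduct]
    rw [dotProduct_comm]
    rfl
  refine ⟨rankTree s (a + b) A c, rankTree_assumption1 _ _ _ _ hA, rankTree_depth ..,
    rankTree_size_le .., fun x => ?_⟩
  calc (rankTree s (a + b) A c).eval x.ofLp
      = ⨆ p, ⨅ u, (A *ᵥ x.ofLp + c) (leafEquiv k a b (p, u)) := by
        rw [rankTree_eval, rankTreeRoot_add hmin, rankTreeRoot_eq_iSup hmax]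
    _ = ⨆ p, ⨅ u, (A *ᵥ x.ofLp + c) (leafEquiv k a b (eι p, eκ u)) := by
        rw [← eι.iSup_comp]
        exact iSup_congr fun p => (eκ.iInf_comp ..).symm
    _ = ⨆ p, ⨅ u, (⟪w p u, x⟫ + t p u) := by simp only [hleaf]

end MaxMin

end GroupSortNet

theorem abs_sub_le_norm_sub {E : Type*} [SeminormedAddCommGroup E] {f : E → ℝ} {s : Set E}
    (hf : LipschitzOnWith 1 f s) {x y : E} (hx : x ∈ s) (hy : y ∈ s) : |f y - f x| ≤ ‖y - x‖ := by
  simpa [Real.dist_eq, dist_eq_norm] using hf.dist_le_mul y hy x hx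

section InnerProductSpace

variable {E ι κ : Type*} [NormedAddCommGroup E] [InnerProductSpace ℝ E] {f : E → ℝ} {x y : E}

theorem abs_sub_iSup_iInf_le [Finite ι] [Finite κ] {s : Set E} {ε : ℝ} {c : ι → E}
    {w : ι → κ → E} (hf : LipschitzOnWith 1 f s) (hc : ∀ p, c p ∈ s) (hw : ∀ p u, ‖w p u‖ ≤ 1)
    (hx : x ∈ s) (hnear : ∃ p, ‖x - c p‖ ≤ ε / 2)
    (hslope : ∀ p, ∃ u, f (c p) + ⟪w p u, x - c p⟫ ≤ f x + ε) :
    |f x - ⨆ p, ⨅ u, (f (c p) + ⟪w p u, x - c p⟫)| ≤ ε := by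
  obtain ⟨p, hp⟩ := hnear
  have : Nonempty ι := ⟨p⟩
  have : Nonempty κ := ⟨(hslope p).choose⟩
  refine abs_sub_le_iff.mpr ⟨sub_le_comm.mp ?_, sub_le_iff_le_add'.mpr ?_⟩
  · refine Finite.le_ciSup_of_le p (le_ciInf fun u => ?_)
    have hfx : f x - f (c p) ≤ ‖x - c p‖ :=
      (le_abs_self _).trans (abs_sub_le_norm_sub hf (hc p) hx)
    have hinner : -‖x - c p‖ ≤ ⟪w p u, x - c p⟫ :=
      neg_le_of_abs_le ((abs_real_inner_le_norm _ _).trans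
        (mul_le_of_le_one_left (norm_nonneg _) (hw p u)))
    linarith
  · refine ciSup_le fun q => ?_
    obtain ⟨u, hu⟩ := hslope q
    exact Finite.ciInf_le_of_le u hu

/-- The gradient of least norm among the affine functions that agree with `f` at `x` and `y`
(it is `0` when `x = y`). -/
noncomputable def secantSlope (f : E → ℝ) (x y : E) : E :=
  ((f y - f x) / ‖y - x‖ ^ 2) • (y - x)

theorem norm_secantSlope_le_one (h : |f y - f x| ≤ ‖y - x‖) : ‖secantSlope f x y‖ ≤ 1 := by
  have hnorm : ‖secantSlope f x y‖ = |f y - f x| / ‖y - x‖ := by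
    rw [secantSlope, norm_smul, Real.norm_eq_abs, abs_div, abs_of_nonneg (sq_nonneg ‖y - x‖)]
    rcases eq_or_ne ‖y - x‖ 0 with h₀ | h₀
    · simp [h₀]
    · field_simp
  exact hnorm.trans_le (div_le_one_of_le₀ h (norm_nonneg _))

theorem inner_secantSlope (h : |f y - f x| ≤ ‖y - x‖) : ⟪secantSlope f x y, y - x⟫ = f y - f x := by
  rw [secantSlope, real_inner_smul_left, real_inner_self_eq_norm_sq]
  refine div_mul_cancel_of_imp fun h₀ => ?_
  rwa [pow_eq_zero_iff two_ne_zero |>.mp h₀, abs_nonpos_iff] at h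

theorem add_inner_secantSlope_le {s : Set E} (hf : LipschitzOnWith 1 f s) {z : E} (hx : x ∈ s)
    (hy : y ∈ s) (hz : z ∈ s) : f x + ⟪secantSlope f x y, z - x⟫ ≤ f z + 2 * ‖z - y‖ := by
  have hxy : |f y - f x| ≤ ‖y - x‖ := abs_sub_le_norm_sub hf hx hy
  have hsecant : ⟪secantSlope f x y, y - x⟫ = f y - f x := inner_secantSlope hxy
  have hrest : ⟪secantSlope f x y, z - y⟫ ≤ ‖z - y‖ :=
    (real_inner_le_norm _ _).trans
      (mul_le_of_le_one_left (norm_nonneg _) (norm_secantSlope_le_one hxy))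
  have hfy : f y - f z ≤ ‖z - y‖ :=
    (le_abs_self _).trans ((abs_sub_le_norm_sub hf hz hy).trans_eq (norm_sub_rev _ _))
  rw [← sub_add_sub_cancel z y x, inner_add_right]
  linarith

end InnerProductSpace

section Grid

variable {d k : ℕ}

/-- The cube `[0, 1] ^ d` as a subset of Euclidean space. -/
def unitCube (d : ℕ) : Set (EuclideanSpace ℝ (Fin d)) :=
  WithLp.ofLp ⁻¹' Set.Icc 0 1

/-- The centre of the cell with index `g` when the unit cube is cut into `k ^ d` equal cells. -/
noncomputable def gridCenter (g : Fin d → Fin k) : EuclideanSpace ℝ (Fin d) :=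
  WithLp.toLp 2 fun i => ((g i : ℕ) + 1 / 2) / (k : ℝ)

theorem gridCenter_mem_unitCube (g : Fin d → Fin k) : gridCenter g ∈ unitCube d := by
  refine ⟨fun i => ?_, fun i => ?_⟩
  · change (0 : ℝ) ≤ ((g i : ℕ) + 1 / 2) / k
    positivity
  · change ((g i : ℕ) + 1 / 2) / (k : ℝ) ≤ 1
    have hlt : ((g i : ℕ) : ℝ) + 1 ≤ k := by exact_mod_cast (g i).isLt
    exact div_le_one_of_le₀ (by linarith) (Nat.cast_nonneg k)

theorem norm_le_sqrt_mul_of_abs_apply_le {v : EuclideanSpace ℝ (Fin d)} {r : ℝ} (hr : 0 ≤ r)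
    (hv : ∀ i, |v i| ≤ r) : ‖v‖ ≤ √d * r := by
  rw [EuclideanSpace.norm_eq, ← Real.sqrt_sq hr, ← Real.sqrt_mul (Nat.cast_nonneg d)]
  refine Real.sqrt_le_sqrt ?_
  calc ∑ i, ‖v i‖ ^ 2 ≤ ∑ _i : Fin d, r ^ 2 :=
        Finset.sum_le_sum fun i _ => pow_le_pow_left₀ (norm_nonneg _) (hv i) 2
    _ = d * r ^ 2 := by simp

theorem norm_sub_le_of_mem_unitCube {x y : EuclideanSpace ℝ (Fin d)} (hx : x ∈ unitCube d)
    (hy : y ∈ unitCube d) : ‖x - y‖ ≤ √d := by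
  rw [← mul_one √d]
  refine norm_le_sqrt_mul_of_abs_apply_le zero_le_one fun i => ?_
  exact abs_sub_le_of_nonneg_of_le (hx.1 i) (hx.2 i) (hy.1 i) (hy.2 i)

theorem exists_abs_sub_div_le [NeZero k] {t : ℝ} (ht : t ∈ Set.Icc (0 : ℝ) 1) :
    ∃ j : Fin k, |t - ((j : ℕ) + 1 / 2) / k| ≤ 1 / (2 * k) := by
  have hk : (0 : ℝ) < k := Nat.cast_pos.mpr (NeZero.pos k)
  suffices h : ∃ j : Fin k, (j : ℝ) ≤ t * k ∧ t * k ≤ j + 1 by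
    obtain ⟨j, hj₁, hj₂⟩ := h
    refine ⟨j, ?_⟩
    rw [show t - ((j : ℕ) + 1 / 2) / (k : ℝ) = (t * k - (j + 1 / 2)) / k by field_simp,
      abs_div, abs_of_pos hk, ← div_div]
    gcongr
    rw [abs_le]
    constructor <;> linarith
  have htk : 0 ≤ t * k := mul_nonneg ht.1 hk.le
  rcases ht.2.lt_or_eq with h₁ | rfl
  · exact ⟨⟨⌊t * k⌋₊, (Nat.floor_lt htk).mpr (mul_lt_of_lt_one_left hk h₁)⟩,
      Nat.floor_le htk, (Nat.lt_floor_add_one _).le⟩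
  · refine ⟨Fin.rev 0, ?_⟩
    have hpred : ((Fin.rev (0 : Fin k) : ℕ) : ℝ) = k - 1 := by
      simp [Fin.val_rev, Nat.cast_pred (NeZero.pos k)]
    constructor <;> linarith

theorem exists_norm_sub_gridCenter_le [NeZero k] {x : EuclideanSpace ℝ (Fin d)}
    (hx : x ∈ unitCube d) : ∃ g : Fin d → Fin k, ‖x - gridCenter g‖ ≤ √d / k / 2 := by
  choose g hg using fun i => exists_abs_sub_div_le (k := k) ⟨hx.1 i, hx.2 i⟩
  refine ⟨g, (norm_le_sqrt_mul_of_abs_apply_le (by positivity) hg).trans_eq ?_⟩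
  ring

end Grid

section Directions

theorem inner_exp_ofReal_mul_I (t : ℝ) (z : ℂ) :
    ⟪Complex.exp (t * Complex.I), z⟫ = Real.cos (Complex.arg z - t) * ‖z‖ := by
  have hprod : z * (starRingEnd ℂ) (Complex.exp (t * Complex.I)) =
      ‖z‖ * Complex.exp ((Complex.arg z - t : ℝ) * Complex.I) := by
    rw [← Complex.exp_conj, map_mul, Complex.conj_ofReal, Complex.conj_I]
    nth_rw 1 [← Complex.norm_mul_exp_arg_mul_I z]
    rw [mul_assoc, ← Complex.exp_add]
    push_cast
    ring_nf
  rw [Complex.inner, hprod, Complex.re_ofReal_mul, Complex.exp_ofReal_mul_I_re, mul_comm]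

theorem exists_mul_norm_le_inner_stdAddChar (k : ℕ) [NeZero k] (z : ℂ) :
    ∃ u : ZMod k, (1 - (π / k) ^ 2 / 2) * ‖z‖ ≤ ⟪ZMod.stdAddChar u, z⟫ := by
  have hk : (0 : ℝ) < k := Nat.cast_pos.mpr (NeZero.pos k)
  let m : ℤ := round (Complex.arg z * k / (2 * π))
  let θ : ℝ := Complex.arg z - 2 * π * m / k
  have hθ : |θ| ≤ π / k := by
    have hscale : θ = 2 * π / k * (Complex.arg z * k / (2 * π) - m) := by
      simp only [θ]
      field_simp
    rw [hscale, abs_mul, abs_of_pos (by positivity)]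
    calc 2 * π / k * |Complex.arg z * k / (2 * π) - m| ≤ 2 * π / k * (1 / 2) := by
          gcongr
          exact abs_sub_round _
      _ = π / k := by ring
  have hcos : 1 - (π / k) ^ 2 / 2 ≤ Real.cos θ := by
    have hsq : θ ^ 2 ≤ (π / k) ^ 2 := sq_le_sq' (neg_le_of_abs_le hθ) (le_of_abs_le hθ)
    linarith [Real.one_sub_sq_div_two_le_cos (x := θ)]
  have hinner : ⟪ZMod.stdAddChar (m : ZMod k), z⟫ = Real.cos θ * ‖z‖ := by
    have hchar : ZMod.stdAddChar (m : ZMod k) = Complex.exp ((2 * π * m / k : ℝ) * Complex.I) := by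
      rw [ZMod.stdAddChar_coe]
      push_cast
      ring_nf
    rw [hchar, inner_exp_ofReal_mul_I]
  exact ⟨m, hinner ▸ mul_le_mul_of_nonneg_right hcos (norm_nonneg z)⟩

end Directions

namespace GroupSortNet

variable {k d : ℕ} {f : EuclideanSpace ℝ (Fin d) → ℝ}

theorem exists_abs_sub_eval_le_of_slopes [NeZero k] (hf : LipschitzOnWith 1 f (unitCube d)) {b : ℕ}
    {κ : Type*} [Fintype κ] (hκ : Fintype.card κ = k ^ b) {ε : ℝ} (hε : √d / k ≤ ε)
    {w : (Fin d → Fin k) → κ → EuclideanSpace ℝ (Fin d)} (hw : ∀ g u, ‖w g u‖ ≤ 1)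
    (hslope : ∀ g, ∀ x ∈ unitCube d, ∃ u,
      f (gridCenter g) + ⟪w g u, x - gridCenter g⟫ ≤ f x + ε) :
    ∃ N : GroupSortNet k d, N.Assumption1 ∧ N.depth = d + b + 1 ∧
      N.size ≤ (d + b) * k ^ (d + b) ∧ ∀ x ∈ unitCube d, |f x - N.eval x.ofLp| ≤ ε := by
  obtain ⟨N, hN, hdepth, hsize, heval⟩ := exists_eval_eq_iSup_iInf (a := d) (by simp) hκ hw
    fun g u => f (gridCenter g) - ⟪w g u, gridCenter g⟫
  refine ⟨N, hN, hdepth, hsize, fun x hx => ?_⟩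
  have hnear : ∃ g : Fin d → Fin k, ‖x - gridCenter g‖ ≤ ε / 2 := by
    obtain ⟨g, hg⟩ := exists_norm_sub_gridCenter_le (k := k) hx
    exact ⟨g, hg.trans (by gcongr)⟩
  convert abs_sub_iSup_iInf_le hf gridCenter_mem_unitCube hw hx hnear fun g => hslope g x hx
  rw [heval]
  congr! 4 with g u
  rw [inner_sub_right]
  ring

theorem exists_abs_sub_eval_le_of_secants [NeZero k] (hf : LipschitzOnWith 1 f (unitCube d)) :
    ∃ N : GroupSortNet k d, N.Assumption1 ∧ N.depth = d + d + 1 ∧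
      N.size ≤ (d + d) * k ^ (d + d) ∧ ∀ x ∈ unitCube d, |f x - N.eval x.ofLp| ≤ √d / k := by
  refine exists_abs_sub_eval_le_of_slopes (κ := Fin d → Fin k) hf (by simp) le_rfl
    (w := fun g h => secantSlope f (gridCenter g) (gridCenter h)) (fun g h => ?_)
    fun g x hx => ?_
  · exact norm_secantSlope_le_one
      (abs_sub_le_norm_sub hf (gridCenter_mem_unitCube g) (gridCenter_mem_unitCube h))
  · obtain ⟨h, hh⟩ := exists_norm_sub_gridCenter_le (k := k) hx
    refine ⟨h, (add_inner_secantSlope_le hf (gridCenter_mem_unitCube g)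
      (gridCenter_mem_unitCube h) hx).trans ?_⟩
    linarith

theorem exists_abs_sub_eval_le_plane {f : EuclideanSpace ℝ (Fin 2) → ℝ}
    (hf : LipschitzOnWith 1 f (unitCube 2)) (hk : 3 ≤ k) :
    ∃ N : GroupSortNet k 2, N.Assumption1 ∧ N.depth = 4 ∧
      N.size ≤ 3 * k ^ 3 ∧ ∀ x ∈ unitCube 2, |f x - N.eval x.ofLp| ≤ 2 * √2 / k := by
  have : NeZero k := ⟨by omega⟩
  let v (u : ZMod k) : EuclideanSpace ℝ (Fin 2) :=
    Complex.orthonormalBasisOneI.repr (ZMod.stdAddChar u)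
  have hk₀ : (0 : ℝ) < k := Nat.cast_pos.mpr (NeZero.pos k)
  have hangle : (π / k) ^ 2 / 2 ≤ 2 / k := by
    have hk₃ : (3 : ℝ) ≤ k := by exact_mod_cast hk
    have hπ : π ^ 2 ≤ 4 * k := by nlinarith [Real.pi_lt_d2, Real.pi_pos]
    rw [div_pow, div_div, div_le_div_iff₀ (by positivity) hk₀]
    nlinarith
  refine exists_abs_sub_eval_le_of_slopes (b := 1) hf (by simp [ZMod.card])
    (w := fun _ u => -v u) ?_ (fun _ u => ?_) fun g x hx => ?_
  · rw [Nat.cast_ofNat]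
    gcongr
    linarith [Real.sqrt_nonneg 2]
  · simp [v]
  · obtain ⟨u, hu⟩ := exists_mul_norm_le_inner_stdAddChar k
      (Complex.orthonormalBasisOneI.repr.symm (x - gridCenter g))
    have hinner : (1 - (π / k) ^ 2 / 2) * ‖x - gridCenter g‖ ≤ ⟪v u, x - gridCenter g⟫ := by
      rwa [LinearIsometryEquiv.norm_map, ← LinearIsometryEquiv.inner_map_map
        Complex.orthonormalBasisOneI.repr, LinearIsometryEquiv.apply_symm_apply] at hu
    have hlip : f (gridCenter g) - f x ≤ ‖x - gridCenter g‖ :=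
      (le_abs_self _).trans ((abs_sub_le_norm_sub hf hx (gridCenter_mem_unitCube g)).trans_eq
        (norm_sub_rev _ _))
    have herror : (π / k) ^ 2 / 2 * ‖x - gridCenter g‖ ≤ 2 / k * √(2 : ℕ) :=
      mul_le_mul hangle (norm_sub_le_of_mem_unitCube hx (gridCenter_mem_unitCube g))
        (norm_nonneg _) (by positivity)
    refine ⟨u, ?_⟩
    rw [inner_neg_left, mul_div_right_comm]
    push_cast at herror
    linarith

theorem exists_abs_sub_eval_le (hd : 2 ≤ d) (hk : 3 ≤ k) (hf : LipschitzOnWith 1 f (unitCube d)) :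
    ∃ N : GroupSortNet k d, N.Assumption1 ∧ N.depth ≤ 2 * d + 1 ∧
      N.size ≤ 2 * d * k ^ (d ^ 2 - 1) ∧
      ∀ x ∈ unitCube d, |f x - N.eval x.ofLp| ≤ 2 * √d / k := by
  have : NeZero k := ⟨by omega⟩
  rcases hd.eq_or_lt with rfl | hd
  · obtain ⟨N, hN, hdepth, hsize, happrox⟩ := exists_abs_sub_eval_le_plane hf hk
    exact ⟨N, hN, by omega, hsize.trans (Nat.mul_le_mul_right _ (by norm_num)), happrox⟩
  · obtain ⟨N, hN, hdepth, hsize, happrox⟩ := exists_abs_sub_eval_le_of_secants (k := k) hf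
    have hexp : d + d ≤ d ^ 2 - 1 := Nat.le_sub_of_add_le (by nlinarith)
    refine ⟨N, hN, by omega, ?_, fun x hx => (happrox x hx).trans ?_⟩
    · rw [two_mul]
      exact hsize.trans (Nat.mul_le_mul_left _ (Nat.pow_le_pow_right (NeZero.pos k) hexp))
    · gcongr
      linarith [Real.sqrt_nonneg d]

theorem exists_abs_sub_eval_le_sqrt (k : ℕ) (hf : LipschitzOnWith 1 f (unitCube d)) :
    ∃ N : GroupSortNet k d, N.Assumption1 ∧ N.depth = 1 ∧ N.size = 0 ∧
      ∀ x ∈ unitCube d, |f x - N.eval x.ofLp| ≤ √d := by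
  have h₀ : 0 ∈ unitCube d := ⟨le_rfl, zero_le_one⟩
  refine ⟨ofAffine k 0 fun _ => f 0, ofAffine_assumption1 (by simp) _, rfl, rfl, fun x hx => ?_⟩
  have heval : (ofAffine k 0 fun _ => f 0).eval x.ofLp = f 0 := by
    change (0 : Fin d → ℝ) ⬝ᵥ x.ofLp + f 0 = f 0
    rw [zero_dotProduct, zero_add]
  rw [heval]
  exact (abs_sub_le_norm_sub hf h₀ hx).trans (norm_sub_le_of_mem_unitCube hx h₀)

theorem exists_abs_sub_eval_le_of_pos (hd : 2 ≤ d) (hf : LipschitzOnWith 1 f (unitCube d)) {ε : ℝ}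
    (hε : 0 < ε) :
    ∃ N : GroupSortNet ⌈2 * √d / ε⌉₊ d, N.Assumption1 ∧ N.depth ≤ 2 * d + 1 ∧
      N.size ≤ 2 * d * (2 * (2 * √d / ε)) ^ (d ^ 2 - 1) ∧
      ∀ x ∈ unitCube d, |f x - N.eval x.ofLp| ≤ ε := by
  rcases le_or_gt (2 * √d / ε) 2 with hlarge | hsmall
  · obtain ⟨N, hN, hdepth, hsize, happrox⟩ := exists_abs_sub_eval_le_sqrt ⌈2 * √d / ε⌉₊ hf
    refine ⟨N, hN, by omega, ?_, fun x hx => (happrox x hx).trans ?_⟩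
    · rw [hsize, Nat.cast_zero]
      positivity
    · linarith [(div_le_iff₀ hε).mp hlarge]
  · have hk : 3 ≤ ⌈2 * √d / ε⌉₊ := Nat.lt_ceil.mpr (by exact_mod_cast hsmall)
    obtain ⟨N, hN, hdepth, hsize, happrox⟩ := exists_abs_sub_eval_le hd hk hf
    refine ⟨N, hN, hdepth, ?_, fun x hx => (happrox x hx).trans ?_⟩
    · calc (N.size : ℝ) ≤ 2 * d * (⌈2 * √d / ε⌉₊ : ℝ) ^ (d ^ 2 - 1) := by exact_mod_cast hsize
        _ ≤ 2 * d * (2 * (2 * √d / ε)) ^ (d ^ 2 - 1) := by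
            gcongr
            exact Nat.ceil_le_two_mul (by linarith)
    · exact div_le_of_le_mul₀ (Nat.cast_nonneg _) hε.le
        ((div_le_iff₀' hε).mp (Nat.le_ceil _))

end GroupSortNet

/-- Approximation of `1`-Lipschitz (Euclidean norm) functions on `[0,1]^d`, `d ≥ 2`, by
GroupSort networks of grouping size `⌈2√d/ε⌉` satisfying Assumption 1: for some constant
`C` independent of `ε`, the network has depth at most `C d²` and size at most
`C (2√d/ε)^(d² - 1)`. -/
theorem groupSortNet_approx_lipschitz_large_group (d : ℕ) (hd : 2 ≤ d) :
    ∃ C : ℝ, 0 < C ∧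
      ∀ ε : ℝ, 0 < ε →
        ∀ f : (Fin d → ℝ) → ℝ,
          (∀ x ∈ Set.Icc (0 : Fin d → ℝ) 1, ∀ y ∈ Set.Icc (0 : Fin d → ℝ) 1,
            |f x - f y| ≤ Real.sqrt (∑ i, (x i - y i) ^ 2)) →
          ∃ N : GroupSortNet ⌈2 * Real.sqrt d / ε⌉₊ d, N.Assumption1 ∧
            (∀ x ∈ Set.Icc (0 : Fin d → ℝ) 1, |f x - N.eval x| ≤ ε) ∧
            (N.depth : ℝ) ≤ C * (d : ℝ) ^ 2 ∧
            (N.size : ℝ) ≤ C * (2 * Real.sqrt d / ε) ^ (d ^ 2 - 1) := by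
  have hd₀ : (1 : ℝ) ≤ d ^ 2 := one_le_pow₀ (by exact_mod_cast one_le_two.trans hd)
  refine ⟨(2 * d + 1) * 2 ^ (d ^ 2 - 1), by positivity, fun ε hε f hf => ?_⟩
  have hlip : LipschitzOnWith 1 (f ∘ WithLp.ofLp) (unitCube d) :=
    LipschitzOnWith.of_dist_le_mul fun x hx y hy => by
      simpa [Real.dist_eq, EuclideanSpace.dist_eq] using hf x.ofLp hx y.ofLp hy
  obtain ⟨N, hN, hdepth, hsize, happrox⟩ :=
    GroupSortNet.exists_abs_sub_eval_le_of_pos hd hlip hε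
  refine ⟨N, hN, fun x hx => happrox (WithLp.toLp 2 x) hx, ?_, ?_⟩
  · calc (N.depth : ℝ) ≤ 2 * d + 1 := by exact_mod_cast hdepth
      _ ≤ (2 * d + 1) * 2 ^ (d ^ 2 - 1) :=
          le_mul_of_one_le_right (by positivity) (one_le_pow₀ one_le_two)
      _ ≤ (2 * d + 1) * 2 ^ (d ^ 2 - 1) * d ^ 2 := le_mul_of_one_le_right (by positivity) hd₀
  · calc (N.size : ℝ) ≤ 2 * d * (2 * (2 * √d / ε)) ^ (d ^ 2 - 1) := hsize
      _ ≤ (2 * d + 1) * (2 * (2 * √d / ε)) ^ (d ^ 2 - 1) := by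
          gcongr
          exact le_add_of_nonneg_right zero_le_one
      _ = (2 * d + 1) * 2 ^ (d ^ 2 - 1) * (2 * √d / ε) ^ (d ^ 2 - 1) := by
          rw [mul_pow, mul_assoc]
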